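/- Let n ≥ 1, let P ⊆ ℝ^n be a nonempty bounded open convex set, and let φ : P → ℝ be a convex function that is Lebesgue-integrable on P and satisfies ∫_P φ dμ = 0. Then −(2/(n+1))·(n/(n+1))^n · inf_P φ ≤ (1/μ(P)) ∫_P |φ| dμ ≤ −2 · inf_P φ. -/

import Mathlib

open MeasureTheory Set

/-!
Since `∫ φ = 0`, one has `∫ |φ| = 2 ∫ φ⁻`, and the upper bound is `φ⁻ ≤ -inf φ`.

For the lower bound, contract `P` towards a point `x₀ ∈ P` by a factor `t ∈ (0, 1]`. The contracted
copy lies in `P`, so `∫_P φ⁻ ≥ tⁿ ∫_P φ⁻(t y + (1 - t) x₀) dy`, and by convexity the last integrand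
is at least `-(t φ(y) + (1 - t) φ(x₀))`, whose integral is `-(1 - t) φ(x₀) μ(P)`. The resulting
factor `tⁿ (1 - t)` is largest at `t = n / (n + 1)`. As `x₀` is arbitrary, this also shows that `φ`
is bounded below.
-/

open Module (finrank)
open AffineMap (homothety)

section SignedIntegral

variable {α : Type*} [MeasurableSpace α] {μ : Measure α} {f : α → ℝ}

lemma integral_abs_eq_integral_add_two_mul_integral_negPart (hf : Integrable f μ) :
    ∫ x, |f x| ∂μ = ∫ x, f x ∂μ + 2 * ∫ x, (f x)⁻ ∂μ := by
  have abs_eq (a : ℝ) : |a| = a + 2 * a⁻ := by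
    linarith [posPart_add_negPart a, posPart_sub_negPart a]
  have negPart_integrable : Integrable (fun x => (f x)⁻) μ := hf.neg_part
  simp_rw [abs_eq]
  rw [integral_add hf (negPart_integrable.const_mul 2), integral_const_mul]

lemma setAverage_abs_eq_two_mul_setAverage_negPart {s : Set α} (hf : IntegrableOn f s μ)
    (hzero : ∫ x in s, f x ∂μ = 0) :
    ⨍ x in s, |f x| ∂μ = 2 * ⨍ x in s, (f x)⁻ ∂μ := by
  rw [setAverage_eq, setAverage_eq, integral_abs_eq_integral_add_two_mul_integral_negPart hf, hzero,
    zero_add, smul_eq_mul, smul_eq_mul, mul_left_comm]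

lemma setAverage_abs_le_neg_two_mul {s : Set α} {m : ℝ} (hs : NullMeasurableSet s μ)
    (hs_pos : μ s ≠ 0) (hs_fin : μ s ≠ ⊤) (hf : IntegrableOn f s μ)
    (hzero : ∫ x in s, f x ∂μ = 0) (hm : ∀ x ∈ s, m ≤ f x) :
    ⨍ x in s, |f x| ∂μ ≤ -2 * m := by
  have hm_nonpos : m ≤ 0 := by
    obtain ⟨x, hx, hfx⟩ := exists_le_setAverage hs_pos hs_fin hf
    rw [setAverage_eq, hzero, smul_zero] at hfx
    exact (hm x hx).trans hfx
  have negPart_le : ∀ᵐ x ∂μ.restrict s, (f x)⁻ ∈ Iic (-m) :=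
    (ae_restrict_mem₀ hs).mono fun x hx =>
      max_le (neg_le_neg (hm x hx)) (neg_nonneg.mpr hm_nonpos)
  have average_le : ⨍ x in s, (f x)⁻ ∂μ ≤ -m :=
    (convex_Iic (-m)).set_average_mem isClosed_Iic hs_pos hs_fin negPart_le hf.neg_part
  linarith [setAverage_abs_eq_two_mul_setAverage_negPart hf hzero]

end SignedIntegral

section Homothety

lemma homothety_image_subset_of_starConvex {E : Type*} [AddCommGroup E] [Module ℝ E] {s : Set E}
    {c : E} {t : ℝ} (hs : StarConvex ℝ c s) (ht₀ : 0 ≤ t) (ht₁ : t ≤ 1) :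
    homothety c t '' s ⊆ s := by
  rintro _ ⟨y, hy, rfl⟩
  rw [AffineMap.homothety_eq_lineMap]
  exact hs.segment_subset hy (lineMap_mem_segment ℝ c y ⟨ht₀, ht₁⟩)

variable {E : Type*} [NormedAddCommGroup E] [NormedSpace ℝ E] [MeasurableSpace E] [BorelSpace E]
  [FiniteDimensional ℝ E]

lemma measurableEmbedding_homothety (c : E) {r : ℝ} (hr : r ≠ 0) :
    MeasurableEmbedding (homothety c r) :=
  (AffineMap.homothety_continuous c r).measurableEmbedding (AffineMap.homothety_injective c hr)

variable {μ : Measure E} [μ.IsAddHaarMeasure]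

lemma map_homothety_addHaar (c : E) {r : ℝ} (hr : r ≠ 0) :
    μ.map (homothety c r) = ENNReal.ofReal |(r ^ finrank ℝ E)⁻¹| • μ := by
  have homothety_eq : ⇑(homothety c r) = (· + c) ∘ (r • ·) ∘ (· - c) := by
    rw [AffineMap.coe_homothety]
    rfl
  rw [homothety_eq, ← Measure.map_map (by fun_prop) (by fun_prop),
    ← Measure.map_map (by fun_prop) (by fun_prop), map_sub_right_eq_self,
    Measure.map_addHaar_smul μ hr, Measure.map_smul, map_add_right_eq_self]

lemma integrableOn_comp_homothety_iff {F : Type*} [NormedAddCommGroup F] {f : E → F} {s : Set E}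
    (c : E) {r : ℝ} (hr : r ≠ 0) :
    IntegrableOn (fun y => f (homothety c r y)) s μ ↔ IntegrableOn f (homothety c r '' s) μ := by
  have scale_ne_zero : ENNReal.ofReal |(r ^ finrank ℝ E)⁻¹| ≠ 0 :=
    (ENNReal.ofReal_pos.mpr (by positivity)).ne'
  have h := (measurableEmbedding_homothety c hr).integrableOn_map_iff (μ := μ) (f := f)
    (s := homothety c r '' s)
  rw [preimage_image_eq s (AffineMap.homothety_injective c hr), map_homothety_addHaar c hr,
    IntegrableOn, Measure.restrict_smul,
    integrable_smul_measure scale_ne_zero ENNReal.ofReal_ne_top] at h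
  exact h.symm

lemma setIntegral_comp_homothety {F : Type*} [NormedAddCommGroup F] [NormedSpace ℝ F] (f : E → F)
    (s : Set E) (c : E) {r : ℝ} (hr : r ≠ 0) :
    ∫ y in s, f (homothety c r y) ∂μ =
      |(r ^ finrank ℝ E)⁻¹| • ∫ x in homothety c r '' s, f x ∂μ := by
  rw [← preimage_image_eq s (AffineMap.homothety_injective c hr),
    ← (measurableEmbedding_homothety c hr).setIntegral_map, map_homothety_addHaar c hr,
    Measure.restrict_smul, integral_smul_measure, ENNReal.toReal_ofReal (abs_nonneg _),
    preimage_image_eq s (AffineMap.homothety_injective c hr)]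

lemma integrableOn_comp_homothety_of_starConvex {F : Type*} [NormedAddCommGroup F] {f : E → F}
    {s : Set E} {c : E} {t : ℝ} (hs : StarConvex ℝ c s) (ht₀ : 0 < t) (ht₁ : t ≤ 1)
    (hf : IntegrableOn f s μ) : IntegrableOn (fun y => f (homothety c t y)) s μ :=
  (integrableOn_comp_homothety_iff c ht₀.ne').mpr
    (hf.mono_set (homothety_image_subset_of_starConvex hs ht₀.le ht₁))

lemma pow_mul_setIntegral_comp_homothety_le {f : E → ℝ} {s : Set E} {c : E} {t : ℝ}
    (hs : StarConvex ℝ c s) (ht₀ : 0 < t) (ht₁ : t ≤ 1) (hf : IntegrableOn f s μ)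
    (hf_nonneg : 0 ≤ᵐ[μ.restrict s] f) :
    t ^ finrank ℝ E * ∫ y in s, f (homothety c t y) ∂μ ≤ ∫ x in s, f x ∂μ := by
  have jacobian_pos : 0 < t ^ finrank ℝ E := by positivity
  calc t ^ finrank ℝ E * ∫ y in s, f (homothety c t y) ∂μ
      = ∫ x in homothety c t '' s, f x ∂μ := by
        rw [setIntegral_comp_homothety f s c ht₀.ne', abs_of_pos (inv_pos.mpr jacobian_pos),
          smul_eq_mul, mul_inv_cancel_left₀ jacobian_pos.ne']
    _ ≤ ∫ x in s, f x ∂μ :=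
        setIntegral_mono_set hf hf_nonneg
          (homothety_image_subset_of_starConvex hs ht₀.le ht₁).eventuallyLE

end Homothety

section ConvexOn

lemma neg_convexCombination_le_negPart_homothety {E : Type*} [AddCommGroup E] [Module ℝ E]
    {P : Set E} {φ : E → ℝ} (hφ : ConvexOn ℝ P φ) {x₀ y : E} (hx₀ : x₀ ∈ P) (hy : y ∈ P) {t : ℝ}
    (ht₀ : 0 ≤ t) (ht₁ : t ≤ 1) :
    -((1 - t) * φ x₀ + t * φ y) ≤ (φ (homothety x₀ t y))⁻ := by
  have convexity := hφ.2 hx₀ hy (sub_nonneg.mpr ht₁) ht₀ (sub_add_cancel 1 t)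
  rw [← AffineMap.lineMap_apply_module, ← AffineMap.homothety_eq_lineMap] at convexity
  exact (neg_le_neg convexity).trans (neg_le_negPart _)

variable {E : Type*} [NormedAddCommGroup E] [NormedSpace ℝ E] [MeasurableSpace E] [BorelSpace E]
  [FiniteDimensional ℝ E] {μ : Measure E} [μ.IsAddHaarMeasure] {P : Set E} {φ : E → ℝ}

lemma pow_mul_neg_le_setIntegral_negPart (hφ : ConvexOn ℝ P φ) (hP_fin : μ P ≠ ⊤)
    (hint : IntegrableOn φ P μ) {x₀ : E} (hx₀ : x₀ ∈ P) {t : ℝ} (ht₀ : 0 < t) (ht₁ : t ≤ 1) :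
    t ^ finrank ℝ E * -((1 - t) * φ x₀ * μ.real P + t * ∫ y in P, φ y ∂μ) ≤
      ∫ x in P, (φ x)⁻ ∂μ := by
  have hstar : StarConvex ℝ x₀ P := hφ.1.starConvex hx₀
  have const_integrable : IntegrableOn (fun _ => (1 - t) * φ x₀) P μ := integrableOn_const hP_fin
  have negPart_integrable : IntegrableOn (fun x => (φ x)⁻) P μ := hint.neg_part
  have convexCombination_integrable :
      IntegrableOn (fun y => -((1 - t) * φ x₀ + t * φ y)) P μ :=
    (const_integrable.add (hint.const_mul t)).neg
  have integral_convexCombination :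
      ∫ y in P, -((1 - t) * φ x₀ + t * φ y) ∂μ =
        -((1 - t) * φ x₀ * μ.real P + t * ∫ y in P, φ y ∂μ) := by
    rw [integral_neg, integral_add const_integrable (hint.const_mul t), setIntegral_const,
      integral_const_mul, smul_eq_mul, mul_comm (μ.real P)]
  calc t ^ finrank ℝ E * -((1 - t) * φ x₀ * μ.real P + t * ∫ y in P, φ y ∂μ)
      = t ^ finrank ℝ E * ∫ y in P, -((1 - t) * φ x₀ + t * φ y) ∂μ := by
        rw [integral_convexCombination]
    _ ≤ t ^ finrank ℝ E * ∫ y in P, (φ (homothety x₀ t y))⁻ ∂μ := by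
        refine mul_le_mul_of_nonneg_left ?_ (by positivity)
        exact setIntegral_mono_on₀ convexCombination_integrable
          (integrableOn_comp_homothety_of_starConvex hstar ht₀ ht₁ negPart_integrable)
          (hφ.1.nullMeasurableSet μ)
          fun y hy => neg_convexCombination_le_negPart_homothety hφ hx₀ hy ht₀.le ht₁
    _ ≤ ∫ x in P, (φ x)⁻ ∂μ :=
        pow_mul_setIntegral_comp_homothety_le hstar ht₀ ht₁ negPart_integrable
          (ae_of_all _ fun x => negPart_nonneg (φ x))

lemma pow_mul_neg_le_setAverage_abs (hφ : ConvexOn ℝ P φ) (hP_pos : μ P ≠ 0) (hP_fin : μ P ≠ ⊤)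
    (hint : IntegrableOn φ P μ) (hzero : ∫ x in P, φ x ∂μ = 0) {x₀ : E} (hx₀ : x₀ ∈ P) {t : ℝ}
    (ht₀ : 0 < t) (ht₁ : t ≤ 1) :
    2 * (t ^ finrank ℝ E * (1 - t)) * -φ x₀ ≤ ⨍ x in P, |φ x| ∂μ := by
  have volume_pos : 0 < μ.real P := ENNReal.toReal_pos hP_pos hP_fin
  have negPart_bound := pow_mul_neg_le_setIntegral_negPart hφ hP_fin hint hx₀ ht₀ ht₁
  rw [hzero] at negPart_bound
  rw [setAverage_abs_eq_two_mul_setAverage_negPart hint hzero, mul_assoc, setAverage_eq,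
    smul_eq_mul, ← div_eq_inv_mul]
  gcongr
  rw [le_div_iff₀ volume_pos]
  linarith

theorem stmt_0_general [Nontrivial E] (hφ : ConvexOn ℝ P φ) (hP_pos : μ P ≠ 0) (hP_fin : μ P ≠ ⊤)
    (hint : IntegrableOn φ P μ) (hzero : ∫ x in P, φ x ∂μ = 0) :
    -((2 / (finrank ℝ E + 1 : ℝ)) * ((finrank ℝ E : ℝ) / (finrank ℝ E + 1)) ^ finrank ℝ E) *
        sInf (φ '' P) ≤ ⨍ x in P, |φ x| ∂μ ∧
      ⨍ x in P, |φ x| ∂μ ≤ -2 * sInf (φ '' P) := by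
  have finrank_pos : (0 : ℝ) < finrank ℝ E := mod_cast Module.finrank_pos
  set n := finrank ℝ E
  set C : ℝ := 2 / (n + 1) * (n / (n + 1)) ^ n with hC
  have C_pos : 0 < C := by positivity
  have le_apply : ∀ x ∈ P, -((⨍ x in P, |φ x| ∂μ) / C) ≤ φ x := by
    intro x hx
    have bound := pow_mul_neg_le_setAverage_abs hφ hP_pos hP_fin hint hzero hx
      (t := n / (n + 1)) (by positivity) (div_le_one_of_le₀ (by linarith) (by positivity))
    have C_eq : 2 * ((n / (n + 1) : ℝ) ^ n * (1 - n / (n + 1))) = C := by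
      rw [hC, one_sub_div (by positivity)]
      ring
    rw [C_eq] at bound
    rwa [neg_le, le_div_iff₀' C_pos]
  have bddBelow : BddBelow (φ '' P) := ⟨_, forall_mem_image.mpr le_apply⟩
  constructor
  · have le_sInf := le_csInf ((nonempty_of_measure_ne_zero hP_pos).image φ)
      (forall_mem_image.mpr le_apply)
    rw [neg_le, le_div_iff₀' C_pos] at le_sInf
    rwa [neg_mul_comm]
  · exact setAverage_abs_le_neg_two_mul (hφ.1.nullMeasurableSet μ) hP_pos hP_fin hint hzero
      fun x hx => csInf_le bddBelow (mem_image_of_mem φ hx)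

end ConvexOn

/-- Sharp double inequality between the `L¹` norm of a centered convex function
on a bounded open convex set and its infimum. -/
theorem stmt_0 (n : ℕ) (hn : 1 ≤ n) (P : Set (Fin n → ℝ))
    (hne : P.Nonempty) (hbd : Bornology.IsBounded P) (hop : IsOpen P) (hcv : Convex ℝ P)
    (φ : (Fin n → ℝ) → ℝ) (hφ : ConvexOn ℝ P φ)
    (hint : IntegrableOn φ P volume)
    (hzero : (∫ x in P, φ x) = 0) :
    -((2 / (n + 1 : ℝ)) * ((n : ℝ) / (n + 1)) ^ n) * sInf (φ '' P)
        ≤ (1 / (volume P).toReal) * ∫ x in P, |φ x| ∧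
      (1 / (volume P).toReal) * ∫ x in P, |φ x| ≤ -2 * sInf (φ '' P) := by
  have : Nonempty (Fin n) := ⟨⟨0, hn⟩⟩
  simpa only [setAverage_eq, smul_eq_mul, Measure.real, one_div, Module.finrank_fin_fun] using
    stmt_0_general hφ (hop.measure_pos volume hne).ne' hbd.measure_lt_top.ne hint hzero
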